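/- A generalised multi-clause-set F with n(F) > 0 is matching lean if and only if surp(F) ≥ 1. -/

import Mathlib

open scoped Classical

namespace GCLS

variable {V α : Type} [DecidableEq V] [DecidableEq α]

/-- A finite "functional" set of (variable, value) pairs, with values inside the
given domains `D`; used both for clauses and for partial assignments. -/
def FinFn (D : V → Finset α) : Type :=
  { s : Finset (V × α) // (∀ p ∈ s, p.2 ∈ D p.1) ∧
      ∀ p ∈ s, ∀ q ∈ s, p.1 = q.1 → p = q }

variable {D : V → Finset α}

instance : DecidableEq (FinFn D) :=
  fun a b => decidable_of_iff (a.1 = b.1) Subtype.ext_iff.symm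

namespace FinFn

/-- The set of variables occurring. -/
def vars (s : FinFn D) : Finset V := s.1.image Prod.fst

/-- Restriction to the pairs whose variable lies in `W`. -/
def restrictVars (s : FinFn D) (W : Finset V) : FinFn D :=
  ⟨s.1.filter (fun p => p.1 ∈ W),
   fun p hp => s.2.1 p (Finset.mem_filter.mp hp).1,
   fun p hp q hq h =>
     s.2.2 p (Finset.mem_filter.mp hp).1 q (Finset.mem_filter.mp hq).1 h⟩

/-- Removal of a set of pairs. -/
def sdiff (s : FinFn D) (t : Finset (V × α)) : FinFn D :=
  ⟨s.1 \ t,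
   fun p hp => s.2.1 p (Finset.mem_sdiff.mp hp).1,
   fun p hp q hq h =>
     s.2.2 p (Finset.mem_sdiff.mp hp).1 q (Finset.mem_sdiff.mp hq).1 h⟩

end FinFn

/-- Clauses: finite sets of literals `(v,ε)` (meaning "v ≠ ε"), at most one literal
per variable, values inside the domains. -/
abbrev Clause (D : V → Finset α) := FinFn D

/-- Partial assignments: finitely many variables get values inside their domains. -/
abbrev PAssign (D : V → Finset α) := FinFn D

/-- `φ` satisfies the literal `(v,ε)` (i.e. "v ≠ ε"): `v` is assigned a value ≠ `ε`. -/
def SatLit (φ : PAssign D) (l : V × α) : Prop :=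
  ∃ ε, (l.1, ε) ∈ φ.1 ∧ ε ≠ l.2

/-- `φ` satisfies a clause iff it satisfies some literal of it. -/
def SatClause (φ : PAssign D) (C : Clause D) : Prop :=
  ∃ l ∈ C.1, SatLit φ l

/-- The clause obtained from `C` by deleting all literals falsified by `φ`. -/
def Clause.restrict (φ : PAssign D) (C : Clause D) : Clause D :=
  FinFn.sdiff C φ.1

/-- The operation `φ * F` on multi-clause-sets: remove all clauses satisfied by `φ`
and delete all falsified literals from the remaining clauses. -/
noncomputable def applyM (φ : PAssign D) (F : Multiset (Clause D)) : Multiset (Clause D) :=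
  (F.filter (fun C => ¬ SatClause φ C)).map (Clause.restrict φ)

/-- The operation `φ * F` on clause-sets (with contraction of equal clauses). -/
noncomputable def applyF (φ : PAssign D) (F : Finset (Clause D)) : Finset (Clause D) :=
  (F.filter (fun C => ¬ SatClause φ C)).image (Clause.restrict φ)

/-- Satisfiability: some partial assignment satisfies all clauses. -/
def Sat (F : Multiset (Clause D)) : Prop :=
  ∃ φ : PAssign D, applyM φ F = 0

/-- Minimal unsatisfiability of a clause-set. -/
def MinUnsat (F : Finset (Clause D)) : Prop :=
  ¬ Sat F.val ∧ ∀ F' ⊂ F, Sat F'.val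

/-- The variables of a multi-clause-set. -/
def mvars (F : Multiset (Clause D)) : Finset V := F.toFinset.sup FinFn.vars

/-- The deficiency `δ(F) = c(F) - Σ_{v ∈ var(F)} (|D_v| - 1)`. -/
def delta (F : Multiset (Clause D)) : ℤ :=
  (Multiset.card F : ℤ) - ∑ v ∈ mvars F, ((D v).card - 1 : ℤ)

lemma powerset_toFinset_nonempty (F : Multiset (Clause D)) :
    F.powerset.toFinset.Nonempty :=
  ⟨0, by simp⟩

/-- The maximal deficiency `δ*(F) = max {δ(F') : F' ≤ F}`. -/
noncomputable def deltaStar (F : Multiset (Clause D)) : ℤ :=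
  F.powerset.toFinset.sup' (powerset_toFinset_nonempty F) delta

/-- A tight sub-multi-clause-set: `F' ≤ F` with `δ(F') = δ*(F)`. -/
noncomputable def Tight (F F' : Multiset (Clause D)) : Prop :=
  F' ≤ F ∧ delta F' = deltaStar F

/-- `F` is matching satisfiable: the clause-variable graph `B(F)` has a matching
covering all clause-nodes.  Such a matching is encoded as a multiset `P` of pairs
(clause-occurrence, variable-node), where the variable-nodes `(v,k)`,
`k < |D v| - 1`, are the copies of the variable `v`; the matching covers each
clause-occurrence exactly once (`P.map Prod.fst = F`), uses pairwise distinct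
variable-nodes, and respects adjacency in `B(F)`. -/
def MatchingSat (F : Multiset (Clause D)) : Prop :=
  ∃ P : Multiset (Clause D × (V × ℕ)),
    P.map Prod.fst = F ∧ (P.map Prod.snd).Nodup ∧
    ∀ p ∈ P, p.2.1 ∈ FinFn.vars p.1 ∧ p.2.2 < (D p.2.1).card - 1

/-- The edge between clause `C` and the copies of variable `v` is retained in
`B_φ(F)`: the literal of `C` with variable `v` is satisfied by `φ`. -/
def EdgeSat (φ : PAssign D) (C : Clause D) (v : V) : Prop :=
  ∃ ε, (v, ε) ∈ C.1 ∧ SatLit φ (v, ε)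

/-- `φ` is matching-satisfying for `F`: `B_φ(F)` has a matching covering all
clause-nodes. -/
def MatchingSatisfying (φ : PAssign D) (F : Multiset (Clause D)) : Prop :=
  ∃ P : Multiset (Clause D × (V × ℕ)),
    P.map Prod.fst = F ∧ (P.map Prod.snd).Nodup ∧
    ∀ p ∈ P, p.2.2 < (D p.2.1).card - 1 ∧ EdgeSat φ p.1 p.2.1

/-- The maximum size of a matching in `B(F)`. -/
noncomputable def nu (F : Multiset (Clause D)) : ℕ :=
  sSup { k | ∃ P : Multiset (Clause D × (V × ℕ)),
    P.map Prod.fst ≤ F ∧ (P.map Prod.snd).Nodup ∧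
    (∀ p ∈ P, p.2.1 ∈ FinFn.vars p.1 ∧ p.2.2 < (D p.2.1).card - 1) ∧
    Multiset.card P = k }

/-- The maximum size of a matching in `B_φ(F)`. -/
noncomputable def nuSub (φ : PAssign D) (F : Multiset (Clause D)) : ℕ :=
  sSup { k | ∃ P : Multiset (Clause D × (V × ℕ)),
    P.map Prod.fst ≤ F ∧ (P.map Prod.snd).Nodup ∧
    (∀ p ∈ P, p.2.2 < (D p.2.1).card - 1 ∧ EdgeSat φ p.1 p.2.1) ∧
    Multiset.card P = k }

/-- `φ` is matching-maximum for `F`. -/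
noncomputable def MatchingMaximum (φ : PAssign D) (F : Multiset (Clause D)) : Prop :=
  nuSub φ F = nu F

/-- `φ` is an autarky for `F`: every clause touched by `φ` is satisfied by `φ`. -/
def IsAutarky (φ : PAssign D) (F : Multiset (Clause D)) : Prop :=
  ∀ C ∈ F, (FinFn.vars C ∩ FinFn.vars φ).Nonempty → SatClause φ C

/-- `F` is lean: it has no non-trivial autarky. -/
def IsLean (F : Multiset (Clause D)) : Prop :=
  ¬ ∃ φ : PAssign D, IsAutarky φ F ∧ (FinFn.vars φ ∩ mvars F).Nonempty

/-- The sub-multi-clause-set of clauses touched by the variables in `W`. -/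
noncomputable def touchedBy (F : Multiset (Clause D)) (W : Finset V) : Multiset (Clause D) :=
  F.filter (fun C => (FinFn.vars C ∩ W).Nonempty)

/-- The restriction `F[W]`: keep the clauses touching `W` and delete from them all
literals whose variable is not in `W`. -/
noncomputable def restrictTo (F : Multiset (Clause D)) (W : Finset V) : Multiset (Clause D) :=
  (touchedBy F W).map (fun C => FinFn.restrictVars C W)

/-- `φ` is a matching autarky for `F`: `φ` is matching-satisfying for the
sub-multi-clause-set of clauses touched by `φ`. -/
noncomputable def IsMatchingAutarky (φ : PAssign D) (F : Multiset (Clause D)) : Prop :=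
  MatchingSatisfying φ (touchedBy F (FinFn.vars φ))

/-- `F` is matching lean: no non-trivial matching autarky. -/
noncomputable def MatchingLean (F : Multiset (Clause D)) : Prop :=
  ¬ ∃ φ : PAssign D, IsMatchingAutarky φ F ∧ (FinFn.vars φ ∩ mvars F).Nonempty

lemma surp_nonempty {F : Multiset (Clause D)} (h : (mvars F).Nonempty) :
    ((mvars F).powerset.erase ∅).Nonempty := by
  obtain ⟨v, hv⟩ := h
  refine ⟨{v}, ?_⟩
  simp [Finset.mem_erase, Finset.singleton_subset_iff, hv]

/-- The surplus `surp(F) = min {δ(F[W]) : ∅ ≠ W ⊆ var(F)}` (and `0` if `var(F) = ∅`). -/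
noncomputable def surp (F : Multiset (Clause D)) : ℤ :=
  if h : (mvars F).Nonempty then
    ((mvars F).powerset.erase ∅).inf' (surp_nonempty h)
      (fun W => delta (restrictTo F W))
  else 0

/-- The number of occurrences of the literal `l` in `F`. -/
noncomputable def litCount (F : Multiset (Clause D)) (l : V × α) : ℕ :=
  Multiset.card (F.filter (fun C => l ∈ C.1))

/-- The number of occurrences `#_v(F)` of the variable `v` in `F`. -/
noncomputable def varCount (F : Multiset (Clause D)) (v : V) : ℕ :=
  ∑ ε ∈ D v, litCount F (v, ε)

/-- The partial assignment `⟨v → ε⟩`. -/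
def single (v : V) (ε : α) (hε : ε ∈ D v) : PAssign D :=
  ⟨{(v, ε)}, by
    refine ⟨?_, ?_⟩
    · intro p hp
      rw [Finset.mem_singleton] at hp
      subst hp; exact hε
    · intro p hp q hq _
      rw [Finset.mem_singleton] at hp hq
      subst hp; subst hq; rfl⟩

/-- Composition `φ ∘ ψ` of partial assignments: domain is the union of the domains,
`ψ` taking precedence. -/
def comp (φ ψ : PAssign D) : PAssign D :=
  ⟨ψ.1 ∪ φ.1.filter (fun p => p.1 ∉ FinFn.vars ψ), by
    constructor
    · intro p hp
      rcases Finset.mem_union.mp hp with h | h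
      · exact ψ.2.1 p h
      · exact φ.2.1 p (Finset.mem_filter.mp h).1
    · intro p hp q hq hpq
      rcases Finset.mem_union.mp hp with h1 | h1 <;>
        rcases Finset.mem_union.mp hq with h2 | h2
      · exact ψ.2.2 p h1 q h2 hpq
      · exact absurd (hpq ▸ Finset.mem_image_of_mem Prod.fst h1)
          (Finset.mem_filter.mp h2).2
      · exact absurd (hpq.symm ▸ Finset.mem_image_of_mem Prod.fst h2)
          (Finset.mem_filter.mp h1).2
      · exact φ.2.2 p (Finset.mem_filter.mp h1).1 q (Finset.mem_filter.mp h2).1 hpq⟩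

/-- Two clauses clash (in some variable). -/
def Clash (C C' : Clause D) : Prop :=
  ∃ v ε ε', (v, ε) ∈ C.1 ∧ (v, ε') ∈ C'.1 ∧ ε ≠ ε'

/-- The number of variables in which two clauses clash. -/
noncomputable def clashCount (C C' : Clause D) : ℕ :=
  ((FinFn.vars C).filter
    (fun v => ∃ ε ε', (v, ε) ∈ C.1 ∧ (v, ε') ∈ C'.1 ∧ ε ≠ ε')).card

/-- Hitting clause-sets: every two distinct clauses clash. -/
def Hitting (F : Finset (Clause D)) : Prop :=
  ∀ C ∈ F, ∀ C' ∈ F, C ≠ C' → Clash C C'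

/-- Boolean clauses over the boolean variables `V × α` (one boolean variable per
generalised literal; the value `false` gives the positive boolean literal). -/
abbrev BClause (V α : Type) :=
  Clause (fun _ : V × α => (Finset.univ : Finset Bool))

/-- The direct translation of a single clause: each literal `(v,ε)` is replaced by
the positive boolean literal of the boolean variable `(v,ε)`. -/
def dirClause (C : Clause D) : BClause V α :=
  ⟨C.1.image (fun p => (p, false)), by
    constructor
    · intro p _; exact Finset.mem_univ _
    · intro p hp q hq h
      simp only [Finset.mem_image] at hp hq
      obtain ⟨a, -, rfl⟩ := hp
      obtain ⟨b, -, rfl⟩ := hq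
      exact congrArg (fun x => (x, false)) h⟩

/-- The ALO-clause for a variable `v`: the negative boolean literals of the boolean
variables `(v,ε)` for `ε ∈ D v`. -/
def aloClause (D : V → Finset α) (v : V) : BClause V α :=
  ⟨(D v).image (fun ε => ((v, ε), true)), by
    constructor
    · intro p _; exact Finset.mem_univ _
    · intro p hp q hq h
      simp only [Finset.mem_image] at hp hq
      obtain ⟨a, -, rfl⟩ := hp
      obtain ⟨b, -, rfl⟩ := hq
      exact congrArg (fun x => (x, true)) h⟩

/-- The direct translation `Γ(F)`: the translated clauses together with the
ALO-clauses for all occurring variables. -/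
noncomputable def dirTrans (F : Finset (Clause D)) : Finset (BClause V α) :=
  F.image dirClause ∪ (mvars F.val).image (aloClause D)

/-!
Write `κ v = |D_v| - 1`. For `∅ ≠ W ⊆ var(F)` the deficiency of `F[W]` is the number of clauses
touching `W` minus the number `∑_{v ∈ W} κ v` of copies of the variables in `W`; call `W`
deficient if this is at most `0`.

If `φ` is a non-trivial matching autarky, its matching injects the clauses touched by
`W = var(φ) ∩ var(F)` into the copies of `W`, so `W` is deficient. Conversely, take an
inclusion-minimal deficient `W`. Hall's condition holds for the clauses touching `W`: from a
violating set `s` of clauses, deleting the variables of `s` from `W` would remove fewer than `|s|`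
copies but at least `|s|` touched clauses, leaving a smaller deficient set. In the resulting
matching at most `κ v < |D_v|` clauses are matched to copies of `v`, so some value of `v` differs
from all the values in their `v`-literals; these values form a matching autarky on `W`.
-/

section Hall

open Finset

variable {ι X : Type*}

/-- The node set consisting of `κ v` copies `(v, 0), …, (v, κ v - 1)` of each `v ∈ W`. -/
def copies (κ : X → ℕ) (W : Finset X) : Finset (X × ℕ) :=
  (W.sigma fun v => range (κ v)).map (Equiv.sigmaEquivProd X ℕ).toEmbedding

lemma mem_copies {κ : X → ℕ} {W : Finset X} {q : X × ℕ} :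
    q ∈ copies κ W ↔ q.1 ∈ W ∧ q.2 < κ q.1 := by
  simp [copies, Finset.mem_map_equiv]

lemma card_copies (κ : X → ℕ) (W : Finset X) : #(copies κ W) = ∑ v ∈ W, κ v := by
  simp [copies]

lemma copies_mono (κ : X → ℕ) {U W : Finset X} (h : U ⊆ W) : copies κ U ⊆ copies κ W :=
  map_subset_map.2 (sigma_mono h fun _ => Subset.rfl)

lemma card_fiber_le_of_injective [Fintype ι] [DecidableEq X] {κ : X → ℕ} {f : ι → X × ℕ}
    (hf : f.Injective) (hlt : ∀ i, (f i).2 < κ (f i).1) (v : X) :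
    #{i | (f i).1 = v} ≤ κ v := by
  rw [← card_range (κ v)]
  refine card_le_card_of_injOn (fun i => (f i).2) (fun i hi => ?_) fun i hi j hj hij => ?_
  · obtain rfl : (f i).1 = v := by simpa using hi
    simpa using hlt i
  · have hi : (f i).1 = v := by simpa using hi
    have hj : (f j).1 = v := by simpa using hj
    exact hf (Prod.ext (hi.trans hj.symm) hij)

variable [DecidableEq X]

lemma card_copies_sdiff_add_card_copies_inter (κ : X → ℕ) (W U : Finset X) :
    #(copies κ (W \ U)) + #(copies κ (U ∩ W)) = #(copies κ W) := by
  rw [card_copies, card_copies, card_copies, inter_comm, add_comm, sum_inter_add_sum_sdiff]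

lemma copies_biUnion_inter (κ : X → ℕ) (s : Finset ι) (t : ι → Finset X) (W : Finset X) :
    copies κ (s.biUnion t ∩ W) = s.biUnion fun i => copies κ (t i ∩ W) := by
  ext q
  simp only [mem_copies, mem_inter, mem_biUnion]
  tauto

variable [Fintype ι] {t : ι → Finset X} {κ : X → ℕ} {W : Finset X}

/-- The indices of those members of the family `t` that meet `W`. -/
def incident (t : ι → Finset X) (W : Finset X) : Finset ι := {i | (t i ∩ W).Nonempty}

lemma mem_incident {i : ι} : i ∈ incident t W ↔ (t i ∩ W).Nonempty := by
  simp [incident]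

lemma incident_mono {U : Finset X} (h : U ⊆ W) : incident t U ⊆ incident t W :=
  fun _ hi => mem_incident.2 ((mem_incident.1 hi).mono (inter_subset_inter_left h))

lemma card_incident_sdiff_biUnion_add_card_le {s : Finset ι} (hs : s ⊆ incident t W) :
    #(incident t (W \ s.biUnion t)) + #s ≤ #(incident t W) := by
  have hdisj : Disjoint (incident t (W \ s.biUnion t)) s := by
    refine disjoint_left.2 fun i hi his => ?_
    obtain ⟨v, hv⟩ := mem_incident.1 hi
    obtain ⟨hvt, hvW⟩ := mem_inter.1 hv
    exact (mem_sdiff.1 hvW).2 (mem_biUnion.2 ⟨i, his, hvt⟩)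
  rw [← card_union_of_disjoint hdisj]
  exact card_le_card (union_subset (incident_mono sdiff_subset) hs)

/-- A non-empty set `W` met by at most as many members of the family `t` as it has copies.
For the variable sets of the clauses and `W ⊆ var(F)` this says `δ(F[W]) ≤ 0`. -/
def Deficient (t : ι → Finset X) (κ : X → ℕ) (W : Finset X) : Prop :=
  W.Nonempty ∧ #(incident t W) ≤ #(copies κ W)

lemma card_le_card_copies_of_minimal_deficient (hW : Minimal (Deficient t κ) W) {s : Finset ι}
    (hs : s ⊆ incident t W) : #s ≤ #(copies κ (s.biUnion t ∩ W)) := by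
  by_contra! hlt
  have hcopies := card_copies_sdiff_add_card_copies_inter κ W (s.biUnion t)
  have hincident := card_incident_sdiff_biUnion_add_card_le hs
  have hle := hW.prop.2
  have hne : (W \ s.biUnion t).Nonempty := by
    rw [nonempty_iff_ne_empty]
    intro hempty
    have hzero : #(copies κ (W \ s.biUnion t)) = 0 := by simp [hempty, card_copies]
    lia
  have hsub : W ⊆ W \ s.biUnion t := hW.le_of_le ⟨hne, by lia⟩ sdiff_subset
  obtain ⟨i, hi⟩ : s.Nonempty := card_pos.1 (by lia)
  obtain ⟨v, hv⟩ := mem_incident.1 (hs hi)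
  obtain ⟨hvt, hvW⟩ := mem_inter.1 hv
  exact (mem_sdiff.1 (hsub hvW)).2 (mem_biUnion.2 ⟨i, hi, hvt⟩)

lemma exists_injective_of_minimal_deficient (hW : Minimal (Deficient t κ) W) :
    ∃ f : incident t W → X × ℕ, f.Injective ∧ ∀ i, f i ∈ copies κ (t i.1 ∩ W) := by
  refine (all_card_le_biUnion_card_iff_exists_injective _).1 fun s => ?_
  have hs : s.map (.subtype _) ⊆ incident t W := map_subtype_subset s
  simpa [copies_biUnion_inter, map_eq_image, image_biUnion, card_image_of_injective,
    Subtype.val_injective] using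
    card_le_card_copies_of_minimal_deficient hW hs

end Hall

section Variables

omit [DecidableEq α]

lemma FinFn.mem_vars {C : FinFn D} {v : V} : v ∈ C.vars ↔ ∃ ε, (v, ε) ∈ C.1 := by
  simp [FinFn.vars]

lemma FinFn.vars_restrictVars (C : FinFn D) (W : Finset V) :
    (C.restrictVars W).vars = C.vars ∩ W := by
  ext v
  simp [FinFn.vars, FinFn.restrictVars]

end Variables

lemma mem_mvars {F : Multiset (Clause D)} {v : V} : v ∈ mvars F ↔ ∃ C ∈ F, v ∈ C.vars := by
  simp [mvars, Finset.mem_sup]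

lemma mvars_mono {F G : Multiset (Clause D)} (h : F ≤ G) : mvars F ⊆ mvars G :=
  Finset.sup_mono (Multiset.toFinset_subset.2 (Multiset.subset_of_le h))

lemma card_domain_pos_of_mem_mvars {F : Multiset (Clause D)} {v : V} (hv : v ∈ mvars F) :
    0 < (D v).card := by
  obtain ⟨C, -, hvC⟩ := mem_mvars.1 hv
  obtain ⟨ε, hε⟩ := FinFn.mem_vars.1 hvC
  exact Finset.card_pos.2 ⟨ε, C.2.1 _ hε⟩

lemma touchedBy_inter_mvars (F : Multiset (Clause D)) (W : Finset V) :
    touchedBy F (W ∩ mvars F) = touchedBy F W := by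
  refine Multiset.filter_congr fun C hC => ?_
  have hsub : C.vars ⊆ mvars F := fun v hv => mem_mvars.2 ⟨C, hC, hv⟩
  rw [Finset.inter_comm W, ← Finset.inter_assoc, Finset.inter_eq_left.2 hsub]

lemma mvars_restrictTo {F : Multiset (Clause D)} {W : Finset V} (hW : W ⊆ mvars F) :
    mvars (restrictTo F W) = W := by
  ext v
  simp only [mem_mvars, restrictTo, touchedBy, Multiset.mem_map, Multiset.mem_filter]
  constructor
  · rintro ⟨_, ⟨C, -, rfl⟩, hv⟩
    rw [FinFn.vars_restrictVars] at hv
    exact (Finset.mem_inter.1 hv).2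
  · intro hv
    obtain ⟨C, hC, hvC⟩ := mem_mvars.1 (hW hv)
    have hvCW : v ∈ C.vars ∩ W := Finset.mem_inter.2 ⟨hvC, hv⟩
    exact ⟨_, ⟨C, ⟨hC, v, hvCW⟩, rfl⟩, by rwa [FinFn.vars_restrictVars]⟩

/-- The number `|D_v| - 1` of copies of `v` in the clause–variable graph. The subtraction is
truncated, which matters only for an empty domain, and then `v` occurs in no clause. -/
def capacity (D : V → Finset α) (v : V) : ℕ := (D v).card - 1

lemma delta_restrictTo {F : Multiset (Clause D)} {W : Finset V} (hW : W ⊆ mvars F) :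
    delta (restrictTo F W) =
      (Multiset.card (touchedBy F W) : ℤ) - (copies (capacity D) W).card := by
  rw [delta, mvars_restrictTo hW, restrictTo, Multiset.card_map, card_copies, Nat.cast_sum]
  congr 1
  refine Finset.sum_congr rfl fun v hv => ?_
  have hpos := card_domain_pos_of_mem_mvars (hW hv)
  rw [capacity]
  lia

lemma one_le_surp_iff {F : Multiset (Clause D)} (hn : (mvars F).Nonempty) :
    1 ≤ surp F ↔ ∀ W ⊆ mvars F, W.Nonempty → 1 ≤ delta (restrictTo F W) := by
  rw [surp, dif_pos hn, Finset.le_inf'_iff]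
  simp only [Finset.mem_erase, Finset.mem_powerset, Finset.nonempty_iff_ne_empty]
  tauto

lemma MatchingSatisfying.card_le_card_copies {φ : PAssign D} {F : Multiset (Clause D)}
    (h : MatchingSatisfying φ F) :
    Multiset.card F ≤ (copies (capacity D) (φ.vars ∩ mvars F)).card := by
  obtain ⟨P, rfl, hnodup, hP⟩ := h
  have hsub : P.map Prod.snd ⊆
      (copies (capacity D) (φ.vars ∩ mvars (P.map Prod.fst))).val := by
    intro q hq
    obtain ⟨p, hp, rfl⟩ := Multiset.mem_map.1 hq
    obtain ⟨hlt, ε, hεC, ε', hεφ, -⟩ := hP p hp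
    refine mem_copies.2 ⟨Finset.mem_inter.2 ⟨FinFn.mem_vars.2 ⟨ε', hεφ⟩, ?_⟩, hlt⟩
    exact mem_mvars.2 ⟨p.1, Multiset.mem_map_of_mem _ hp, FinFn.mem_vars.2 ⟨ε, hεC⟩⟩
  simpa only [Multiset.card_map, Finset.card_val] using
    Multiset.card_le_card ((Multiset.le_iff_subset hnodup).2 hsub)

lemma IsMatchingAutarky.delta_restrictTo_nonpos {φ : PAssign D} {F : Multiset (Clause D)}
    (h : IsMatchingAutarky φ F) : delta (restrictTo F (φ.vars ∩ mvars F)) ≤ 0 := by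
  rw [delta_restrictTo Finset.inter_subset_right, touchedBy_inter_mvars, sub_nonpos, Nat.cast_le]
  refine h.card_le_card_copies.trans (Finset.card_le_card (copies_mono _ ?_))
  exact Finset.inter_subset_inter_left (mvars_mono (Multiset.filter_le _ _))

omit [DecidableEq V] [DecidableEq α] in
lemma exists_forall_value_ne {ι : Type*} [Finite ι] {f : ι → V × ℕ} (hf : f.Injective)
    (hlt : ∀ i, (f i).2 < capacity D (f i).1) (value : ι → α) {v : V} (hv : 0 < (D v).card) :
    ∃ ε ∈ D v, ∀ i, (f i).1 = v → ε ≠ value i := by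
  have := Fintype.ofFinite ι
  have hcard : (({i | (f i).1 = v} : Finset ι).image value).card < (D v).card :=
    calc _ ≤ capacity D v := Finset.card_image_le.trans (card_fiber_le_of_injective hf hlt v)
      _ < (D v).card := Nat.sub_lt hv one_pos
  obtain ⟨ε, hε, hnot⟩ := Finset.exists_mem_notMem_of_card_lt_card hcard
  refine ⟨ε, hε, fun i hi heq => hnot ?_⟩
  exact Finset.mem_image.2 ⟨i, by simp [hi], heq.symm⟩

omit [DecidableEq α] in
lemma exists_passign_of_forall_exists {W : Finset V} {p : V → α → Prop}
    (h : ∀ v ∈ W, ∃ ε ∈ D v, p v ε) :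
    ∃ φ : PAssign D, φ.vars = W ∧ ∀ l ∈ φ.1, p l.1 l.2 := by
  choose g hgD hgp using h
  refine ⟨⟨W.attach.image fun v => (v.1, g v.1 v.2), ?_, ?_⟩, ?_, ?_⟩
  · simp only [Finset.forall_mem_image]
    exact fun v _ => hgD v.1 v.2
  · simp only [Finset.forall_mem_image]
    rintro ⟨v, hv⟩ - ⟨w, hw⟩ - rfl
    rfl
  · ext v
    simp [FinFn.vars]
  · simp only [Finset.forall_mem_image]
    exact fun v _ => hgp v.1 v.2

section Matching

variable {F : Multiset (Clause D)} {W : Finset V}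

/-- The clause-occurrences of `F`, with repeated clauses kept apart, as a family of variable
sets. -/
def occurrenceVars (F : Multiset (Clause D)) (C : F) : Finset V := C.1.vars

lemma map_incident_occurrenceVars (F : Multiset (Clause D)) (W : Finset V) :
    (incident (occurrenceVars F) W).val.map (fun C => C.1) = touchedBy F W := by
  conv_rhs => rw [touchedBy, ← Multiset.map_univ_coe F, Multiset.filter_map]
  rfl

lemma delta_restrictTo_nonpos_iff_deficient (hW : W ⊆ mvars F) (hne : W.Nonempty) :
    delta (restrictTo F W) ≤ 0 ↔ Deficient (occurrenceVars F) (capacity D) W := by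
  rw [delta_restrictTo hW, sub_nonpos, Nat.cast_le, ← map_incident_occurrenceVars,
    Multiset.card_map, Finset.card_val, Deficient, and_iff_right hne]

lemma matchingSatisfying_touchedBy {φ : PAssign D} {f : incident (occurrenceVars F) W → V × ℕ}
    (hf : f.Injective) (hlt : ∀ C, (f C).2 < capacity D (f C).1)
    (hsat : ∀ C, EdgeSat φ C.1.1 (f C).1) : MatchingSatisfying φ (touchedBy F W) := by
  refine ⟨Finset.univ.val.map fun C => (C.1.1, f C), ?_, ?_, ?_⟩
  · rw [Multiset.map_map, ← map_incident_occurrenceVars]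
    exact Multiset.attach_map_val' _ fun C : F => C.1
  · rw [Multiset.map_map]
    exact Finset.univ.nodup.map hf
  · simp only [Multiset.mem_map, forall_exists_index, and_imp]
    rintro _ C - rfl
    exact ⟨hlt C, hsat C⟩

lemma exists_isMatchingAutarky_of_injective (hW : W ⊆ mvars F)
    {f : incident (occurrenceVars F) W → V × ℕ} (hf : f.Injective)
    (hmem : ∀ C, f C ∈ copies (capacity D) (occurrenceVars F C.1 ∩ W)) :
    ∃ φ : PAssign D, IsMatchingAutarky φ F ∧ φ.vars = W := by
  simp only [mem_copies, Finset.mem_inter] at hmem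
  choose value hvalue using fun C => FinFn.mem_vars.1 (hmem C).1.1
  obtain ⟨φ, hvars, hφ⟩ := exists_passign_of_forall_exists fun v hv =>
    exists_forall_value_ne hf (fun C => (hmem C).2) value (card_domain_pos_of_mem_mvars (hW hv))
  refine ⟨φ, ?_, hvars⟩
  rw [IsMatchingAutarky, hvars]
  refine matchingSatisfying_touchedBy hf (fun C => (hmem C).2) fun C => ⟨value C, hvalue C, ?_⟩
  obtain ⟨ε, hε⟩ := FinFn.mem_vars.1 (hvars ▸ (hmem C).1.2)
  exact ⟨ε, hε, hφ _ hε C rfl⟩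

lemma exists_isMatchingAutarky_of_delta_restrictTo_nonpos (hW : W ⊆ mvars F)
    (hne : W.Nonempty) (hle : delta (restrictTo F W) ≤ 0) :
    ∃ φ : PAssign D, IsMatchingAutarky φ F ∧ φ.vars.Nonempty ∧ φ.vars ⊆ W := by
  obtain ⟨U, hUW, hU⟩ := exists_minimal_le_of_wellFoundedLT _ W
    ((delta_restrictTo_nonpos_iff_deficient hW hne).1 hle)
  obtain ⟨f, hf, hmem⟩ := exists_injective_of_minimal_deficient hU
  obtain ⟨φ, hφ, rfl⟩ := exists_isMatchingAutarky_of_injective (hUW.trans hW) hf hmem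
  exact ⟨φ, hφ, hU.prop.1, hUW⟩

end Matching

/-- a multi-clause-set with at least one variable is matching lean
iff its surplus is at least `1`. -/
theorem matchingLean_iff_surplus_pos
    (hD : ∀ v, (D v).Nonempty) (F : Multiset (Clause D))
    (hn : (mvars F).Nonempty) :
    MatchingLean F ↔ 1 ≤ surp F := by
  rw [one_le_surp_iff hn]
  constructor
  · intro hlean W hW hne
    by_contra! hlt
    obtain ⟨φ, hφ, hφne, hφW⟩ :=
      exists_isMatchingAutarky_of_delta_restrictTo_nonpos hW hne (Int.lt_add_one_iff.1 hlt)
    exact hlean ⟨φ, hφ, by rwa [Finset.inter_eq_left.2 (hφW.trans hW)]⟩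
  · rintro hsurp ⟨φ, hφ, hne⟩
    have hpos := hsurp _ Finset.inter_subset_right hne
    exact absurd hφ.delta_restrictTo_nonpos (by lia)

end GCLS
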